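/- Let F be a field of characteristic ≠ 2 and let M be a nonzero module over the affine Hecke–Clifford algebra H_2^c(F) on which x_1² and x_2² both act as multiplication by the same scalar a ∈ F. Then a = 0. -/

import Mathlib

/-- Generators of the affine Hecke–Clifford algebra `H_n^c(F)` (0-indexed):
`s i` for `i : Fin (n-1)`, and `x i`, `c i` for `i : Fin n`. -/
inductive AHCGen (n : ℕ) : Type
  | s : Fin (n - 1) → AHCGen n
  | x : Fin n → AHCGen n
  | c : Fin n → AHCGen n

/-- The index `i` of the transposition `s i`, as an index in `Fin n`. -/
def idxL {n : ℕ} (i : Fin (n - 1)) : Fin n := ⟨i.val, by have := i.isLt; omega⟩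

/-- The index `i + 1`, as an index in `Fin n`. -/
def idxR {n : ℕ} (i : Fin (n - 1)) : Fin n := ⟨i.val + 1, by have := i.isLt; omega⟩

open FreeAlgebra in
/-- The defining relations of the affine Hecke–Clifford algebra `H_n^c(F)`. -/
inductive AHCRel (F : Type) [Field F] (n : ℕ) :
    FreeAlgebra F (AHCGen n) → FreeAlgebra F (AHCGen n) → Prop
  | s_sq (i : Fin (n - 1)) :
      AHCRel F n (ι F (AHCGen.s i) * ι F (AHCGen.s i)) 1
  | s_comm (i j : Fin (n - 1)) (h : i.val + 1 < j.val ∨ j.val + 1 < i.val) :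
      AHCRel F n (ι F (AHCGen.s i) * ι F (AHCGen.s j))
        (ι F (AHCGen.s j) * ι F (AHCGen.s i))
  | braid (i j : Fin (n - 1)) (h : j.val = i.val + 1) :
      AHCRel F n (ι F (AHCGen.s i) * ι F (AHCGen.s j) * ι F (AHCGen.s i))
        (ι F (AHCGen.s j) * ι F (AHCGen.s i) * ι F (AHCGen.s j))
  | x_comm (i j : Fin n) :
      AHCRel F n (ι F (AHCGen.x i) * ι F (AHCGen.x j))
        (ι F (AHCGen.x j) * ι F (AHCGen.x i))
  | c_sq (i : Fin n) :
      AHCRel F n (ι F (AHCGen.c i) * ι F (AHCGen.c i)) 1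
  | c_anticomm (i j : Fin n) (h : i ≠ j) :
      AHCRel F n (ι F (AHCGen.c i) * ι F (AHCGen.c j))
        (-(ι F (AHCGen.c j) * ι F (AHCGen.c i)))
  | s_x (i : Fin (n - 1)) :
      AHCRel F n (ι F (AHCGen.s i) * ι F (AHCGen.x (idxL i)))
        (ι F (AHCGen.x (idxR i)) * ι F (AHCGen.s i)
          - (1 + ι F (AHCGen.c (idxL i)) * ι F (AHCGen.c (idxR i))))
  | s_x_comm (i : Fin (n - 1)) (j : Fin n) (h1 : j ≠ idxL i) (h2 : j ≠ idxR i) :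
      AHCRel F n (ι F (AHCGen.s i) * ι F (AHCGen.x j))
        (ι F (AHCGen.x j) * ι F (AHCGen.s i))
  | s_c1 (i : Fin (n - 1)) :
      AHCRel F n (ι F (AHCGen.s i) * ι F (AHCGen.c (idxL i)))
        (ι F (AHCGen.c (idxR i)) * ι F (AHCGen.s i))
  | s_c2 (i : Fin (n - 1)) :
      AHCRel F n (ι F (AHCGen.s i) * ι F (AHCGen.c (idxR i)))
        (ι F (AHCGen.c (idxL i)) * ι F (AHCGen.s i))
  | s_c_comm (i : Fin (n - 1)) (j : Fin n) (h1 : j ≠ idxL i) (h2 : j ≠ idxR i) :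
      AHCRel F n (ι F (AHCGen.s i) * ι F (AHCGen.c j))
        (ι F (AHCGen.c j) * ι F (AHCGen.s i))
  | x_c_anti (i : Fin n) :
      AHCRel F n (ι F (AHCGen.x i) * ι F (AHCGen.c i))
        (-(ι F (AHCGen.c i) * ι F (AHCGen.x i)))
  | x_c_comm (i j : Fin n) (h : i ≠ j) :
      AHCRel F n (ι F (AHCGen.x i) * ι F (AHCGen.c j))
        (ι F (AHCGen.c j) * ι F (AHCGen.x i))

/-- The affine Hecke–Clifford algebra `H_n^c(F)`: the quotient of the free
`F`-algebra on the generators by the two-sided ideal generated by the defining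
relations. -/
abbrev AHC (F : Type) [Field F] (n : ℕ) := RingQuot (AHCRel F n)

/-- The generator `s i` in `H_n^c(F)`. -/
noncomputable def sE (F : Type) [Field F] (n : ℕ) (i : Fin (n - 1)) : AHC F n :=
  RingQuot.mkAlgHom F (AHCRel F n) (FreeAlgebra.ι F (AHCGen.s i))

/-- The generator `x i` in `H_n^c(F)`. -/
noncomputable def xE (F : Type) [Field F] (n : ℕ) (i : Fin n) : AHC F n :=
  RingQuot.mkAlgHom F (AHCRel F n) (FreeAlgebra.ι F (AHCGen.x i))

/-- The generator `c i` in `H_n^c(F)`. -/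
noncomputable def cE (F : Type) [Field F] (n : ℕ) (i : Fin n) : AHC F n :=
  RingQuot.mkAlgHom F (AHCRel F n) (FreeAlgebra.ι F (AHCGen.c i))

theorem ahc_aux {F E : Type} [Field F] [Ring E] [Algebra F E] (a : F) (s x y c d : E)
    (hxy : x * y = y * x) (hc : c * c = 1) (hd : d * d = 1) (hcd : c * d = -(d * c))
    (hs : s * x = y * s - (1 + c * d)) (hxc : x * c = -(c * x)) (hyd : y * d = -(d * y))
    (hxd : x * d = d * x) (hyc : y * c = c * y)
    (hx : x * x = algebraMap F E a) (hy : y * y = algebraMap F E a) :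
    algebraMap F E (4 * a) = 0 := by
  have hcm : algebraMap F E a * s = s * algebraMap F E a := Algebra.commutes a s
  obtain ⟨e, he⟩ : ∃ e, e = c * d := ⟨_, rfl⟩
  have hee : e * e = -1 := by
    have : c * d * (c * d) = -(c * c * (d * d)) := by
      calc c * d * (c * d) = c * (d * c) * d := by noncomm_ring
        _ = c * (-(c * d)) * d := by rw [hcd, neg_neg]
        _ = _ := by noncomm_ring
    rw [he, this, hc, hd, one_mul]
  have hxe : x * e = -(e * x) := by
    rw [he, ← mul_assoc, hxc, neg_mul, mul_assoc, hxd, mul_assoc]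
  have hye : y * e = -(e * y) := by
    rw [he, ← mul_assoc, hyc, mul_assoc, hyd, mul_neg, mul_assoc]
  rw [← he] at hs
  have h0 : y * (1 + e) + (1 + e) * x = 0 := by
    have h : s * (x * x) = y * y * s - (y * (1 + e) + (1 + e) * x) := by
      calc s * (x * x) = (s * x) * x := by noncomm_ring
        _ = y * (s * x) - (1 + e) * x := by
            conv_lhs => rw [hs]
            noncomm_ring
        _ = _ := by rw [hs]; noncomm_ring
    rw [hx, hy, hcm] at h
    exact sub_eq_self.1 h.symm
  have h1 : 2 * x = -(2 * (y * e)) := by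
    have h : (y * (1 + e) + (1 + e) * x) * (1 + e) = 2 * x + 2 * (y * e) := by
      have : e * x = -(x * e) := by rw [hxe, neg_neg]
      calc (y * (1 + e) + (1 + e) * x) * (1 + e)
          = y + 2 * (y * e) + y * (e * e) + x + x * e + e * x + (e * x) * e := by noncomm_ring
        _ = y + 2 * (y * e) + y * (e * e) + x + x * e + -(x * e) - x * (e * e) := by
            rw [this]; noncomm_ring
        _ = _ := by rw [hee]; noncomm_ring
    rw [h0, zero_mul] at h
    exact eq_neg_of_add_eq_zero_left h.symm
  have h2 : 4 * ((y * y) * e) = 0 := by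
    have p : 2 * (x * y) = 2 * (y * y * e) := by
      calc 2 * (x * y) = 2 * x * y := by noncomm_ring
        _ = 2 * (y * -(e * y)) := by rw [h1]; noncomm_ring
        _ = _ := by rw [← hye]; noncomm_ring
    have q : 2 * (y * x) = -(2 * (y * y * e)) := by
      calc 2 * (y * x) = y * (2 * x) := by noncomm_ring
        _ = _ := by rw [h1]; noncomm_ring
    rw [hxy, q] at p
    have := sub_eq_zero.2 p.symm
    rw [← this]; noncomm_ring
  have h3 : 4 * (y * y) = 0 := by
    calc 4 * (y * y) = -(4 * (y * y) * (e * e)) := by rw [hee]; noncomm_ring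
      _ = -(4 * (y * y * e) * e) := by noncomm_ring
      _ = 0 := by rw [h2]; simp
  rw [hy] at h3
  rw [map_mul, map_ofNat]
  exact h3

/-- if `M` is a nonzero `H_2^c(F)`-module (char F ≠ 2) on which
`x_1²` and `x_2²` both act as multiplication by the same scalar `a ∈ F`, then
`a = 0`. -/
theorem same_scalar_implies_zero (F : Type) [Field F] (hF : (2 : F) ≠ 0)
    (M : Type) [AddCommGroup M] [Module F M] [Module (AHC F 2) M]
    [IsScalarTower F (AHC F 2) M]
    (hM : ∃ v : M, v ≠ 0) (a : F)
    (h1 : ∀ v : M, (xE F 2 0) ^ 2 • v = a • v)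
    (h2 : ∀ v : M, (xE F 2 1) ^ 2 • v = a • v) :
    a = 0 := by
  have : SMulCommClass (AHC F 2) F M := IsScalarTower.to_smulCommClass'
  let π := RingQuot.mkAlgHom F (AHCRel F 2)
  have R : ∀ {p q}, AHCRel F 2 p q → π p = π q := fun h => RingQuot.mkAlgHom_rel F h
  let ρ : AHC F 2 →ₐ[F] Module.End F M := Algebra.lsmul F F M
  have key := ahc_aux a (ρ (sE F 2 0)) (ρ (xE F 2 0)) (ρ (xE F 2 1)) (ρ (cE F 2 0)) (ρ (cE F 2 1))
    (by
      have h := congrArg ρ (R (AHCRel.x_comm 0 1))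
      simp only [map_mul, map_neg, map_sub, map_add, map_one] at h
      exact h)
    (by
      have h := congrArg ρ (R (AHCRel.c_sq 0))
      simp only [map_mul, map_neg, map_sub, map_add, map_one] at h
      exact h)
    (by
      have h := congrArg ρ (R (AHCRel.c_sq 1))
      simp only [map_mul, map_neg, map_sub, map_add, map_one] at h
      exact h)
    (by
      have h := congrArg ρ (R (AHCRel.c_anticomm 0 1 (by decide)))
      simp only [map_mul, map_neg, map_sub, map_add, map_one] at h
      exact h)
    (by
      have h := congrArg ρ (R (AHCRel.s_x 0))
      simp only [map_mul, map_neg, map_sub, map_add, map_one] at h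
      exact h)
    (by
      have h := congrArg ρ (R (AHCRel.x_c_anti 0))
      simp only [map_mul, map_neg, map_sub, map_add, map_one] at h
      exact h)
    (by
      have h := congrArg ρ (R (AHCRel.x_c_anti 1))
      simp only [map_mul, map_neg, map_sub, map_add, map_one] at h
      exact h)
    (by
      have h := congrArg ρ (R (AHCRel.x_c_comm 0 1 (by decide)))
      simp only [map_mul, map_neg, map_sub, map_add, map_one] at h
      exact h)
    (by
      have h := congrArg ρ (R (AHCRel.x_c_comm 1 0 (by decide)))
      simp only [map_mul, map_neg, map_sub, map_add, map_one] at h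
      exact h)
    (by
      rw [← map_mul, ← pow_two]
      ext v
      exact h1 v)
    (by
      rw [← map_mul, ← pow_two]
      ext v
      exact h2 v)
  obtain ⟨v, hv⟩ := hM
  have h := LinearMap.congr_fun key v
  rw [Module.algebraMap_end_apply, LinearMap.zero_apply] at h
  rcases smul_eq_zero.1 h with h | h
  · have h4 : (4 : F) ≠ 0 := by
      have : (4 : F) = 2 * 2 := by norm_num
      rw [this]; exact mul_ne_zero hF hF
    exact (mul_eq_zero.1 h).resolve_left h4
  · exact absurd h hv
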